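/- arXiv:2504.11525 — 2 statements merged into one kernel-verified Lean document; each statement's English description precedes it below -/
import Mathlib

section
/- Let n ≥ 1 and d : Fin n → ℕ with d j ≥ 2 for every j, and set N = (∏ j, d j) − (∑ j, (d j − 1)) − 1. Then: (a) there exists a subspace C of EuclideanSpace ℂ ((j : Fin n) → Fin (d j)) with finrank C = N whose only fully product element is 0; and (b) every subspace of EuclideanSpace ℂ ((j : Fin n) → Fin (d j)) with finrank equal to N + 1 contains a nonzero fully product vector. Hence the maximum dimension of a completely entangled subspace equals ∏ j, d j − ∑ j, (d j − 1) − 1. -/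
/-- A vector in the `n`-partite space `⊗_j ℂ^{d_j}` is *fully product* if it is a
simple tensor, i.e. `ψ i = ∏ j, φ j (i j)` for some local vectors `φ j`. -/
def FullyProduct {n : ℕ} {d : Fin n → ℕ}
    (ψ : EuclideanSpace ℂ ((j : Fin n) → Fin (d j))) : Prop :=
  ∃ φ : (j : Fin n) → Fin (d j) → ℂ, ∀ i, ψ i = ∏ j, φ j (i j)

/-!
Write `D = ∑ j, (d j - 1)`.

For the lower bound, send the basis vector `|i⟩` to the monomial `X ^ ∑ j, i j`. A product tensor
goes to a product of polynomials whose coefficients are those of its factors, so it is killed only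
if some factor is zero. The target is the space of polynomials of degree at most `D`, hence the
kernel has codimension at most `D + 1`.

For the upper bound, the product tensors form a closed cone (the affine cone over the Segre
variety). Requiring the coordinates of the factors to vanish one after the other gives a strictly
decreasing chain of `D + 2` irreducible closed subsets, from the cone to its vertex. If at most `D`
linear forms cut out only the vertex, then by the Nullstellensatz its maximal ideal is minimal over
these forms in the coordinate ring of the cone, and Krull's height theorem contradicts the chain.
-/

open MvPolynomial

section Ideals

theorem height_map_quotientMk_add_one_le {R : Type*} [CommRing R] {J P Q : Ideal R} [P.IsPrime]
    [Q.IsPrime] (hJP : J ≤ P) (hPQ : P < Q) :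
    (P.map (Ideal.Quotient.mk J)).height + 1 ≤ (Q.map (Ideal.Quotient.mk J)).height := by
  have := Ideal.isPrime_map_quotientMk_of_isPrime hJP
  have := Ideal.isPrime_map_quotientMk_of_isPrime (hJP.trans hPQ.le)
  refine Ideal.height_add_one_le_of_lt_of_isPrime (lt_of_le_not_ge (Ideal.map_mono hPQ.le) ?_)
  intro hQP
  have := Ideal.comap_mono (f := Ideal.Quotient.mk J) hQP
  rw [Ideal.comap_map_mk hJP, Ideal.comap_map_mk (hJP.trans hPQ.le)] at this
  exact hPQ.not_ge this

variable {K σ : Type*} [Field K]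

theorem height_map_vanishingIdeal_singleton_le_ncard [IsAlgClosed K] [Finite σ]
    {J : Ideal (MvPolynomial σ K)} {s : Set (MvPolynomial σ K)} (hs : s.Finite) {x : σ → K}
    (h : zeroLocus K (J ⊔ Ideal.span s) = {x}) :
    ((vanishingIdeal K {x}).map (Ideal.Quotient.mk J)).height ≤ s.ncard := by
  have hminimal : vanishingIdeal K {x} ∈ (Ideal.span s ⊔ J).minimalPrimes := by
    rw [← Ideal.radical_minimalPrimes, sup_comm,
      ← vanishingIdeal_zeroLocus_eq_radical (K := K), h, Ideal.minimalPrimes_eq_subsingleton_self]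
    rfl
  have hmap : (vanishingIdeal K {x}).map (Ideal.Quotient.mk J) ∈
      (Ideal.span (Ideal.Quotient.mk J '' s)).minimalPrimes := by
    rw [← Ideal.map_span, Ideal.minimalPrimes_map_of_surjective Ideal.Quotient.mk_surjective,
      Ideal.mk_ker]
    exact ⟨_, hminimal, rfl⟩
  exact (Ideal.height_le_card_of_mem_minimalPrimes_span (hs.image _) hmap).trans
    (mod_cast Set.ncard_image_le hs)

theorem zeroLocus_sup {k : Type*} [Field k] [Algebra k K] (I J : Ideal (MvPolynomial σ k)) :
    zeroLocus K (I ⊔ J) = zeroLocus K I ∩ zeroLocus K J :=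
  zeroLocus_vanishingIdeal_galoisConnection.l_sup

theorem vanishingIdeal_range_eval [Infinite K] {τ : Type*} (f : σ → MvPolynomial τ K) :
    vanishingIdeal K (Set.range fun x i => eval x (f i)) = RingHom.ker (aeval (R := K) f) := by
  ext p
  rw [mem_vanishingIdeal_iff, Set.forall_mem_range, RingHom.mem_ker, MvPolynomial.funext_iff]
  refine forall_congr' fun x => ?_
  have hcomp : (aeval x).comp (aeval f) = aeval (R := K) fun i => eval x (f i) := by
    ext i
    simp
  rw [← hcomp]
  simp

end Ideals

section ProductTensor

variable {ι : Type*} [Fintype ι] {κ : ι → Type*}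

/-- The simple tensor `⊗_j φ_j`, given by its coordinates in the product basis. -/
def productTensor {R : Type*} [CommMonoid R] (φ : (j : ι) → κ j → R) (i : (j : ι) → κ j) : R :=
  ∏ j, φ j (i j)

/-- The set of simple tensors in `⊗_j R^{κ_j}`; over a field, this is the affine cone over the
Segre variety. -/
def segreCone (R : Type*) [CommMonoid R] (κ : ι → Type*) : Set (((j : ι) → κ j) → R) :=
  Set.range productTensor

theorem productTensor_eq_zero {R : Type*} [CommMonoidWithZero R] {φ : (j : ι) → κ j → R} {j : ι}
    (h : φ j = 0) : productTensor φ = 0 :=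
  funext fun i => Finset.prod_eq_zero (Finset.mem_univ j) (congrFun h (i j))

variable [DecidableEq ι]

theorem productTensor_mul_pow_card {R : Type*} [CommMonoid R] (φ : (j : ι) → κ j → R)
    (c i : (j : ι) → κ j) :
    productTensor φ i * productTensor φ c ^ Fintype.card ι =
      productTensor φ c * ∏ j, productTensor φ (Function.update c j (i j)) := by
  -- In factor `l`, the index `update c j (i j) l` is `i l` for `j = l` and `c l` for all other `j`.
  have hfactor (l : ι) : φ l (i l) * φ l (c l) ^ Fintype.card ι =
      φ l (c l) * ∏ j, φ l (Function.update c j (i j) l) := by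
    have hne : ∀ j ∈ Finset.univ.erase l, φ l (Function.update c j (i j) l) = φ l (c l) :=
      fun j hj => by rw [Function.update_of_ne (Finset.ne_of_mem_erase hj).symm]
    rw [← Finset.mul_prod_erase _ _ (Finset.mem_univ l), Finset.prod_congr rfl hne,
      Finset.prod_const, Finset.card_erase_of_mem (Finset.mem_univ l), Finset.card_univ,
      Function.update_self, mul_left_comm, mul_pow_sub_one (Fintype.card_pos_iff.2 ⟨l⟩).ne']
  simp only [productTensor]
  rw [Finset.prod_comm, ← Finset.prod_pow, ← Finset.prod_mul_distrib, ← Finset.prod_mul_distrib]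
  exact Finset.prod_congr rfl fun l _ => hfactor l

theorem mem_segreCone_iff {K : Type*} [CommGroupWithZero K] [Nonempty ι]
    {y : ((j : ι) → κ j) → K} :
    y ∈ segreCone K κ ↔ ∀ c i,
      y i * y c ^ Fintype.card ι = y c * ∏ j, y (Function.update c j (i j)) := by
  refine ⟨by rintro ⟨φ, rfl⟩; exact productTensor_mul_pow_card φ, fun h => ?_⟩
  obtain rfl | hy := eq_or_ne y 0
  · exact ⟨0, productTensor_eq_zero (j := Classical.arbitrary ι) rfl⟩
  obtain ⟨c, hc : y c ≠ 0⟩ := Function.ne_iff.1 hy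
  -- The slices of `y` through `c`, normalized to `1` at `c`, give `y / y c`.
  let φ (j : ι) (k : κ j) := (if j = Classical.arbitrary ι then y c else 1) *
    (y (Function.update c j k) / y c)
  refine ⟨φ, funext fun i => ?_⟩
  simp only [productTensor, φ]
  rw [Finset.prod_mul_distrib, Finset.prod_ite_eq' Finset.univ, if_pos (Finset.mem_univ _),
    Finset.prod_div_distrib, Finset.prod_const, Finset.card_univ, ← mul_div_assoc, ← h,
    mul_div_cancel_right₀ _ (pow_ne_zero _ hc)]

end ProductTensor

section Segre

variable (K : Type*) [Field K] {ι : Type*} [Fintype ι] {κ : ι → Type*}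

theorem zeroLocus_vanishingIdeal_segreCone [Nonempty ι] :
    zeroLocus K (vanishingIdeal K (segreCone K κ)) = segreCone K κ := by
  classical
  refine (zeroLocus_vanishingIdeal_le _).antisymm' fun y hy => ?_
  refine mem_segreCone_iff.2 fun c i => ?_
  have hrelation : X i * X c ^ Fintype.card ι - X c * ∏ j, X (Function.update c j (i j)) ∈
      vanishingIdeal K (segreCone K κ) := by
    rintro _ ⟨φ, rfl⟩
    simpa [sub_eq_zero] using productTensor_mul_pow_card φ c i
  simpa [sub_eq_zero] using hy _ hrelation

/-- The product tensors `⊗_j φ_j` whose factors satisfy `φ_j k = 0` for all `⟨j, k⟩ ∈ S`. Adding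
the pairs `⟨j, k⟩` to `S` one by one yields the chain of irreducible subsets of the Segre cone. -/
def segreSubcone (S : Set (Σ j, κ j)) : Set (((j : ι) → κ j) → K) :=
  productTensor '' {φ | ∀ v ∈ S, φ v.1 v.2 = 0}

theorem antitone_segreSubcone : Antitone (segreSubcone K (κ := κ)) :=
  fun _ _ h => Set.image_mono fun _ hφ v hv => hφ v (h hv)

theorem segreSubcone_univ [Nonempty ι] :
    segreSubcone K (Set.univ : Set (Σ j, κ j)) = {0} := by
  have hzero (φ : (j : ι) → κ j → K) : (∀ v ∈ Set.univ, φ (Sigma.fst v) v.2 = 0) ↔ φ = 0 := by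
    simp [funext_iff, Sigma.forall]
  simp only [segreSubcone, hzero, Set.ofPred_eq_eq_singleton, Set.image_singleton,
    productTensor_eq_zero (j := Classical.arbitrary ι) (φ := (0 : (j : ι) → κ j → K)) rfl]

instance isPrime_vanishingIdeal_segreSubcone [Infinite K] (S : Set (Σ j, κ j)) :
    (vanishingIdeal K (segreSubcone K S)).IsPrime := by
  classical
  let f (i : (j : ι) → κ j) : MvPolynomial (Σ j, κ j) K :=
    ∏ j, if ⟨j, i j⟩ ∈ S then 0 else X ⟨j, i j⟩
  have hrange : segreSubcone K S = Set.range fun x i => eval x (f i) := by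
    ext ψ
    constructor
    · rintro ⟨φ, hφ, rfl⟩
      refine ⟨fun v => φ v.1 v.2, funext fun i => ?_⟩
      simp only [f, map_prod, productTensor]
      refine Finset.prod_congr rfl fun j _ => ?_
      split_ifs with hj
      · simp [hφ _ hj]
      · simp
    · rintro ⟨x, rfl⟩
      refine ⟨fun j k => if ⟨j, k⟩ ∈ S then 0 else x ⟨j, k⟩, fun v hv => if_pos hv, ?_⟩
      ext i
      simp [f, productTensor, map_prod, apply_ite (eval x)]
  rw [hrange, vanishingIdeal_range_eval]
  exact RingHom.ker_isPrime _

variable {K}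

theorem X_mem_vanishingIdeal_segreSubcone {S : Set (Σ j, κ j)} {i : (j : ι) → κ j} :
    X i ∈ vanishingIdeal K (segreSubcone K S) ↔ ∃ j, ⟨j, i j⟩ ∈ S := by
  classical
  constructor
  · contrapose!
    intro hi h
    let φ (j : ι) : κ j → K := Pi.single (i j) 1
    have hφ : productTensor φ ∈ segreSubcone K S :=
      ⟨φ, fun v hv => Pi.single_eq_of_ne (fun hv' => hi v.1 (by rwa [← hv'])) 1, rfl⟩
    simpa [φ, productTensor] using h _ hφ
  · rintro ⟨j, hj⟩ _ ⟨φ, hφ, rfl⟩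
    rw [aeval_X]
    exact Finset.prod_eq_zero (Finset.mem_univ j) (hφ _ hj)

theorem vanishingIdeal_segreSubcone_lt {S T : Set (Σ j, κ j)} (hST : S ⊆ T)
    {i : (j : ι) → κ j} (hS : ∀ j, ⟨j, i j⟩ ∉ S) (hT : ∃ j, ⟨j, i j⟩ ∈ T) :
    vanishingIdeal K (segreSubcone K S) < vanishingIdeal K (segreSubcone K T) := by
  refine lt_of_le_not_ge (vanishingIdeal_anti_mono (antitone_segreSubcone K hST)) fun h => ?_
  obtain ⟨j, hj⟩ := X_mem_vanishingIdeal_segreSubcone.1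
    (h (X_mem_vanishingIdeal_segreSubcone.2 hT))
  exact hS j hj

theorem vanishingIdeal_segreCone_le (S : Set (Σ j, κ j)) :
    vanishingIdeal K (segreCone K κ) ≤ vanishingIdeal K (segreSubcone K S) :=
  vanishingIdeal_anti_mono (Set.image_subset_range _ _)

theorem card_le_height_map_vanishingIdeal_segreSubcone [Infinite K]
    (c : (j : ι) → κ j) (S : Finset (Σ j, κ j)) (hS : ∀ v ∈ S, v.2 ≠ c v.1) :
    (S.card : ℕ∞) ≤ ((vanishingIdeal K (segreSubcone K (S : Set (Σ j, κ j)))).map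
      (Ideal.Quotient.mk (vanishingIdeal K (segreCone K κ)))).height := by
  classical
  induction S using Finset.induction_on with
  | empty => simp
  | insert v S hv ih =>
    have hlt : vanishingIdeal K (segreSubcone K (S : Set (Σ j, κ j))) <
        vanishingIdeal K (segreSubcone K ↑(insert v S)) := by
      refine vanishingIdeal_segreSubcone_lt (mod_cast Finset.subset_insert v S)
        (i := Function.update c v.1 v.2) (fun j hj => ?_) ⟨v.1, by simp⟩
      obtain rfl | hjv := eq_or_ne j v.1
      · exact hv (by simpa using hj)
      · exact hS _ (Finset.mem_insert_of_mem hj) (by simp [hjv])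
    rw [Finset.card_insert_of_notMem hv, Nat.cast_add, Nat.cast_one]
    exact (add_le_add_left (ih fun w hw => hS w (Finset.mem_insert_of_mem hw)) 1).trans
      (height_map_quotientMk_add_one_le (vanishingIdeal_segreCone_le _) hlt)

variable [Nonempty ι] [∀ j, Fintype (κ j)] [∀ j, Nonempty (κ j)]

theorem sum_card_sub_one_lt_height_map_vanishingIdeal_zero [Infinite K] :
    ((∑ j, (Fintype.card (κ j) - 1) : ℕ) : ℕ∞) <
      ((vanishingIdeal K {(0 : ((j : ι) → κ j) → K)}).map
        (Ideal.Quotient.mk (vanishingIdeal K (segreCone K κ)))).height := by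
  classical
  let c (j : ι) : κ j := Classical.arbitrary _
  let S : Finset (Σ j, κ j) := Finset.univ.sigma fun j => Finset.univ.erase (c j)
  have hS : ∀ v ∈ S, v.2 ≠ c v.1 := fun v hv => by simpa [S] using hv
  have hcard : S.card = ∑ j, (Fintype.card (κ j) - 1) := by
    simp [S, Finset.card_sigma, Finset.card_erase_of_mem]
  have hlt := vanishingIdeal_segreSubcone_lt (K := K) (Set.subset_univ (S : Set (Σ j, κ j)))
    (i := c) (fun j hj => hS _ hj rfl) ⟨Classical.arbitrary ι, Set.mem_univ _⟩
  rw [← hcard, ← segreSubcone_univ, ← ENat.add_one_le_iff (ENat.natCast_ne_top _)]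
  exact (add_le_add_left (card_le_height_map_vanishingIdeal_segreSubcone c S hS) 1).trans
    (height_map_quotientMk_add_one_le (vanishingIdeal_segreCone_le _) hlt)

theorem exists_mem_segreCone_ne_zero_eval_eq_zero [IsAlgClosed K]
    {s : Set (MvPolynomial ((j : ι) → κ j) K)} (hs : s.Finite)
    (hcard : s.ncard ≤ ∑ j, (Fintype.card (κ j) - 1)) (hzero : ∀ p ∈ s, eval 0 p = 0) :
    ∃ ψ ∈ segreCone K κ, ψ ≠ 0 ∧ ∀ p ∈ s, eval ψ p = 0 := by
  by_contra! h
  have hvertex : zeroLocus K (vanishingIdeal K (segreCone K κ) ⊔ Ideal.span s) =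
      {(0 : ((j : ι) → κ j) → K)} := by
    rw [zeroLocus_sup, zeroLocus_vanishingIdeal_segreCone, zeroLocus_span,
      Set.eq_singleton_iff_unique_mem]
    refine ⟨⟨⟨0, productTensor_eq_zero (j := Classical.arbitrary ι) rfl⟩, hzero⟩, ?_⟩
    rintro ψ ⟨hψ, hψs⟩
    by_contra hψ0
    obtain ⟨p, hp, hpψ⟩ := h ψ hψ hψ0
    exact hpψ (hψs p hp)
  exact (height_map_vanishingIdeal_singleton_le_ncard hs hvertex).not_gt
    ((Nat.cast_le.2 hcard).trans_lt sum_card_sub_one_lt_height_map_vanishingIdeal_zero)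

theorem exists_mem_ne_zero_equivFun_mem_segreCone [IsAlgClosed K] {E : Type*} [AddCommGroup E]
    [Module K E] (b : Module.Basis ((j : ι) → κ j) K E) (V : Submodule K E)
    (hV : ∏ j, Fintype.card (κ j) ≤ Module.finrank K V + ∑ j, (Fintype.card (κ j) - 1)) :
    ∃ ψ ∈ V, ψ ≠ 0 ∧ b.equivFun ψ ∈ segreCone K κ := by
  classical
  have := b.finiteDimensional_of_finite
  let b' := Module.finBasis K (E ⧸ V)
  let form := V.mkQ.toMvPolynomial b b'
  have hform (ψ : E) (k) : eval (b.equivFun ψ) (form k) = b'.repr (V.mkQ ψ) k := by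
    simpa [form] using V.mkQ.toMvPolynomial_eval_eq_apply b b' k (b.repr ψ)
  have hcard : (Set.range form).ncard ≤ ∑ j, (Fintype.card (κ j) - 1) := by
    have hrange : (Set.range form).ncard ≤ Module.finrank K (E ⧸ V) := by
      rw [← Set.image_univ]
      exact (Set.ncard_image_le Set.finite_univ).trans (by simp)
    have hquotient := V.finrank_quotient_add_finrank
    rw [Module.finrank_eq_card_basis b, Fintype.card_pi] at hquotient
    omega
  obtain ⟨x, hx, hx0, hxV⟩ := exists_mem_segreCone_ne_zero_eval_eq_zero (Set.finite_range form)
    hcard (Set.forall_mem_range.2 fun k => by simpa using hform 0 k)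
  refine ⟨b.equivFun.symm x, ?_, b.equivFun.symm.map_ne_zero_iff.2 hx0, ?_⟩
  · rw [← Submodule.ker_mkQ V, LinearMap.mem_ker]
    refine b'.ext_elem fun k => ?_
    rw [← hform, LinearEquiv.apply_symm_apply, hxV _ ⟨k, rfl⟩, map_zero, Finsupp.zero_apply]
  · rwa [LinearEquiv.apply_symm_apply]

end Segre

section WeightPolynomial

open Polynomial

variable {ι : Type*} [Fintype ι] [DecidableEq ι] {κ : ι → Type*} [∀ j, Fintype (κ j)]

/-- The linear map sending the basis vector `e_i` to `X ^ ∑ j, w j (i j)`. It turns product tensors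
into products of polynomials, so its kernel is completely entangled if each `w j` is injective. -/
noncomputable def weightPolynomial (R : Type*) [CommSemiring R] (w : (j : ι) → κ j → ℕ) :
    (((j : ι) → κ j) → R) →ₗ[R] R[X] :=
  ∑ i, Polynomial.monomial (∑ j, w j (i j)) ∘ₗ LinearMap.proj i

theorem weightPolynomial_apply {R : Type*} [CommSemiring R] (w : (j : ι) → κ j → ℕ)
    (ψ : ((j : ι) → κ j) → R) :
    weightPolynomial R w ψ = ∑ i, Polynomial.monomial (∑ j, w j (i j)) (ψ i) := by
  simp [weightPolynomial]

theorem weightPolynomial_productTensor {R : Type*} [CommSemiring R] (w : (j : ι) → κ j → ℕ)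
    (φ : (j : ι) → κ j → R) :
    weightPolynomial R w (productTensor φ) = ∏ j, ∑ k, Polynomial.monomial (w j k) (φ j k) := by
  simp only [weightPolynomial_apply, productTensor, Fintype.prod_sum,
    ← Polynomial.C_mul_X_pow_eq_monomial, map_prod, Finset.prod_mul_distrib,
    Finset.prod_pow_eq_pow_sum]

theorem eq_zero_of_weightPolynomial_eq_zero {R : Type*} [CommSemiring R] [NoZeroDivisors R]
    [Nontrivial R] {w : (j : ι) → κ j → ℕ} (hw : ∀ j, Function.Injective (w j))
    {ψ : ((j : ι) → κ j) → R} (hψ : ψ ∈ segreCone R κ) (h : weightPolynomial R w ψ = 0) :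
    ψ = 0 := by
  obtain ⟨φ, rfl⟩ := hψ
  rw [weightPolynomial_productTensor, Finset.prod_eq_zero_iff] at h
  obtain ⟨j, -, hj⟩ := h
  refine productTensor_eq_zero (j := j) (funext fun k => ?_)
  classical
  simpa [Polynomial.finsetSum_coeff, Polynomial.coeff_monomial, (hw j).eq_iff]
    using congrArg (Polynomial.coeff · (w j k)) hj

theorem weightPolynomial_mem_degreeLT {R : Type*} [CommSemiring R] {w : (j : ι) → κ j → ℕ}
    {D : ι → ℕ} (hw : ∀ j k, w j k ≤ D j) (ψ : ((j : ι) → κ j) → R) :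
    weightPolynomial R w ψ ∈ degreeLT R (∑ j, D j + 1) := by
  rw [weightPolynomial_apply]
  refine Submodule.sum_mem _ fun i _ => Polynomial.mem_degreeLT.2 ?_
  refine (Polynomial.degree_monomial_le _ _).trans_lt ?_
  exact_mod_cast Nat.lt_succ_of_le (Finset.sum_le_sum fun j _ => hw j (i j))

theorem prod_card_le_finrank_ker_weightPolynomial (K : Type*) [Field K] {w : (j : ι) → κ j → ℕ}
    {D : ι → ℕ} (hw : ∀ j k, w j k ≤ D j) :
    ∏ j, Fintype.card (κ j) ≤
      Module.finrank K (LinearMap.ker (weightPolynomial K w)) + (∑ j, D j + 1) := by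
  let L := (weightPolynomial K w).codRestrict _ (weightPolynomial_mem_degreeLT hw)
  have hrank := L.finrank_range_add_finrank_ker
  have := (degreeLTEquiv K (∑ j, D j + 1)).symm.finiteDimensional
  have hrange := Submodule.finrank_le (LinearMap.range L)
  rw [(degreeLTEquiv K _).finrank_eq, Module.finrank_fin_fun] at hrange
  rw [LinearMap.ker_codRestrict, Module.finrank_fintype_fun_eq_card, Fintype.card_pi] at hrank
  omega

end WeightPolynomial

theorem exists_submodule_le_finrank_eq {K E : Type*} [DivisionRing K] [AddCommGroup E] [Module K E]
    (W : Submodule K E) {m : ℕ} (h : m ≤ Module.finrank K W) :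
    ∃ C ≤ W, Module.finrank K C = m := by
  obtain ⟨f, hf⟩ := exists_linearIndependent_of_le_finrank h
  refine ⟨Submodule.span K (Set.range fun k => (f k : E)), ?_, ?_⟩
  · rw [Submodule.span_le, Set.range_subset_iff]
    exact fun k => (f k).2
  · exact (finrank_span_eq_card (hf.map' W.subtype W.ker_subtype)).trans (Fintype.card_fin m)

theorem exists_finrank_eq_completelyEntangled {K : Type*} [Field K] {ι : Type*} [Fintype ι]
    {κ : ι → Type*} [∀ j, Fintype (κ j)] {E : Type*} [AddCommGroup E] [Module K E]
    (b : Module.Basis ((j : ι) → κ j) K E) {m : ℕ}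
    (hm : m ≤ (∏ j, Fintype.card (κ j)) - (∑ j, (Fintype.card (κ j) - 1)) - 1) :
    ∃ C : Submodule K E, Module.finrank K C = m ∧
      ∀ ψ ∈ C, b.equivFun ψ ∈ segreCone K κ → ψ = 0 := by
  classical
  let w (j : ι) (k : κ j) : ℕ := Fintype.equivFin (κ j) k
  have hw (j) : Function.Injective (w j) := Fin.val_injective.comp (Equiv.injective _)
  have hker := prod_card_le_finrank_ker_weightPolynomial K (w := w)
    (D := fun j => Fintype.card (κ j) - 1) fun j k => Nat.le_sub_one_of_lt (Fin.isLt _)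
  obtain ⟨C, hC, hCm⟩ := exists_submodule_le_finrank_eq
    (LinearMap.ker (weightPolynomial K w)) (m := m) (by omega)
  refine ⟨C.map b.equivFun.symm.toLinearMap, (b.equivFun.symm.finrank_map_eq C).trans hCm, ?_⟩
  rintro _ ⟨x, hx, rfl⟩ hprod
  rw [LinearEquiv.coe_coe, LinearEquiv.apply_symm_apply] at hprod
  rw [eq_zero_of_weightPolynomial_eq_zero hw hprod (hC hx), map_zero]

theorem max_dim_CES_general {K : Type*} [Field K] [IsAlgClosed K] {ι : Type*} [Fintype ι]
    [Nonempty ι] {κ : ι → Type*} [∀ j, Fintype (κ j)] [∀ j, Nonempty (κ j)] {E : Type*}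
    [AddCommGroup E] [Module K E] (b : Module.Basis ((j : ι) → κ j) K E) (N : ℕ)
    (hN : N = (∏ j, Fintype.card (κ j)) - (∑ j, (Fintype.card (κ j) - 1)) - 1) :
    (∃ C : Submodule K E, Module.finrank K C = N ∧
      ∀ ψ ∈ C, b.equivFun ψ ∈ segreCone K κ → ψ = 0) ∧
    (∀ V : Submodule K E, Module.finrank K V = N + 1 →
      ∃ ψ ∈ V, ψ ≠ 0 ∧ b.equivFun ψ ∈ segreCone K κ) :=
  ⟨exists_finrank_eq_completelyEntangled b hN.le,
    fun V hV => exists_mem_ne_zero_equivFun_mem_segreCone b V (by omega)⟩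

theorem fullyProduct_iff_mem_segreCone {n : ℕ} {d : Fin n → ℕ}
    (ψ : EuclideanSpace ℂ ((j : Fin n) → Fin (d j))) :
    FullyProduct ψ ↔
      (EuclideanSpace.basisFun _ ℂ).toBasis.equivFun ψ ∈ segreCone ℂ fun j => Fin (d j) := by
  refine exists_congr fun φ => ?_
  rw [eq_comm, funext_iff]
  rfl

/-- Theorem 1: the maximum dimension of a completely entangled subspace of
`⊗_j ℂ^{d_j}` is `∏ j, d j − ∑ j, (d j − 1) − 1`. -/
theorem max_dim_CES (n : ℕ) (hn : 1 ≤ n) (d : Fin n → ℕ) (hd : ∀ j, 2 ≤ d j)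
    (N : ℕ) (hN : N = (∏ j, d j) - (∑ j, (d j - 1)) - 1) :
    (∃ C : Submodule ℂ (EuclideanSpace ℂ ((j : Fin n) → Fin (d j))),
        Module.finrank ℂ ↥C = N ∧ ∀ ψ ∈ C, FullyProduct ψ → ψ = 0) ∧
    (∀ V : Submodule ℂ (EuclideanSpace ℂ ((j : Fin n) → Fin (d j))),
        Module.finrank ℂ ↥V = N + 1 → ∃ ψ ∈ V, ψ ≠ 0 ∧ FullyProduct ψ) := by
  have : NeZero n := ⟨Nat.ne_zero_of_lt hn⟩
  have (j : Fin n) : NeZero (d j) := ⟨Nat.ne_zero_of_lt (hd j)⟩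
  simp only [fullyProduct_iff_mem_segreCone]
  exact max_dim_CES_general _ N (by simpa using hN)
end

section
/- Let n ≥ 2 and d : Fin n → ℕ be monotone (d j ≤ d j' for j ≤ j') with d j ≥ 2 for every j, and set G = (d 0 − 1) * ((∏ j ≠ 0, d j) − 1). Then: (a) there exists a subspace of EuclideanSpace ℂ ((j : Fin n) → Fin (d j)) with finrank G in which every nonzero vector is genuinely multipartite entangled; and (b) every subspace with finrank equal to G + 1 contains a nonzero vector that is S-biseparable for some subset S ⊆ Fin n with S ≠ ∅ and S ≠ univ. Hence the maximum dimension of a genuinely entangled subspace equals (d 0 − 1)(∏_{j≥1} d j − 1). -/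
/-- `ψ` is biseparable across the bipartition `(S, Sᶜ)`. -/
def Biseparable {n : ℕ} {d : Fin n → ℕ} (S : Set (Fin n))
    (ψ : EuclideanSpace ℂ ((j : Fin n) → Fin (d j))) : Prop :=
  ∃ (φ : ((j : S) → Fin (d j.val)) → ℂ) (χ : ((j : ↥Sᶜ) → Fin (d j.val)) → ℂ),
    ∀ i, ψ i = φ (fun j => i j.val) * χ (fun j => i j.val)

/-- A nonzero vector is genuinely multipartite entangled if it is not biseparable
across any nontrivial bipartition. -/
def GME {n : ℕ} {d : Fin n → ℕ}
    (ψ : EuclideanSpace ℂ ((j : Fin n) → Fin (d j))) : Prop :=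
  ψ ≠ 0 ∧ ∀ S : Set (Fin n), S ≠ ∅ → S ≠ Set.univ → ¬ Biseparable S ψ

/-! For the lower bound, let `d z` be the smallest dimension and `D` the product of the others.
Number the multi-indices injectively by their mixed radix ranks, and take the vectors `ψ` whose
moments `∑ i, ψ i * rank i ^ k` vanish for `k < d z + D - 1`. Across any bipartition the rank is a
sum `u + v` of functions on the two blocks. If the first nonzero moments of `φ` and `χ`, at
nodes `u` and `v`, have degrees `a` and `b`, then by the binomial theorem the moment of `φ ⊗ χ` of
degree `a + b` is `(a + b).choose a` times their product, hence nonzero. By the Vandermonde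
determinant `a` and `b` are less than the block dimensions, whose sum is largest, namely `d z + D`,
when one block is the party `z` alone.

For the upper bound, split off the party `z`. A subspace of dimension `(d z - 1) * (D - 1) + 1` is
cut out by `d z + D - 2` linear forms. The affine cone over the Segre variety of product vectors
has dimension `d z + D - 1`, so by Krull's height theorem those forms have a common zero on it
other than its vertex. -/

section ProductVector

variable {R α β : Type*}

/-- The product vector `x ⊗ y`, with coordinates indexed by pairs. -/
def productVector [Mul R] (x : α → R) (y : β → R) : α × β → R :=
  fun p => x p.1 * y p.2

theorem left_ne_zero_of_productVector_ne_zero [MulZeroClass R] {x : α → R} {y : β → R}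
    (h : productVector x y ≠ 0) : x ≠ 0 := by
  rintro rfl
  exact h (funext fun p => zero_mul (y p.2))

theorem right_ne_zero_of_productVector_ne_zero [MulZeroClass R] {x : α → R} {y : β → R}
    (h : productVector x y ≠ 0) : y ≠ 0 := by
  rintro rfl
  exact h (funext fun p => mul_zero (x p.1))

theorem exists_eq_productVector_of_minors_eq [Field R] (z : α × β → R)
    (hz : ∀ a a' b b', z (a, b) * z (a', b') = z (a, b') * z (a', b)) :
    ∃ x y, z = productVector x y := by
  by_cases h0 : z = 0
  · exact ⟨0, 0, by ext; simp [h0, productVector]⟩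
  obtain ⟨⟨a, b⟩, hab⟩ := Function.ne_iff.1 h0
  refine ⟨fun a' => z (a', b), fun b' => z (a, b') / z (a, b), funext fun ⟨a', b'⟩ => ?_⟩
  rw [productVector, ← mul_div_assoc, eq_div_iff hab, hz]

end ProductVector

section Moment

variable {R ι κ α β : Type*} [Fintype ι] [Fintype κ] [Fintype α] [Fintype β]

/-- The `k`-th moment `∑ i, f i * u i ^ k` of weights `f` placed at the nodes `u`. -/
def moment [CommSemiring R] (u : ι → R) (k : ℕ) : (ι → R) →ₗ[R] R :=
  Fintype.linearCombination R fun i => u i ^ k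

theorem moment_apply [CommSemiring R] (u : ι → R) (k : ℕ) (f : ι → R) :
    moment u k f = ∑ i, f i * u i ^ k :=
  rfl

theorem moment_comp_equiv [CommSemiring R] (σ : ι ≃ κ) (u : κ → R) (k : ℕ) (f : κ → R) :
    moment (u ∘ σ) k (f ∘ σ) = moment u k f :=
  σ.sum_comp fun i => f i * u i ^ k

theorem exists_moment_ne_zero [CommRing R] [IsDomain R] {u : ι → R} (hu : Function.Injective u)
    {f : ι → R} (hf : f ≠ 0) : ∃ k < Fintype.card ι, moment u k f ≠ 0 := by
  by_contra! h
  let e := (Fintype.equivFin ι).symm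
  have hfe : f ∘ e = (0 : ι → R) ∘ e :=
    Matrix.eq_zero_of_forall_pow_sum_mul_pow_eq_zero (hu.comp e.injective) fun k =>
      (moment_comp_equiv e u k f).trans (h k k.2)
  exact hf (e.surjective.injective_comp_right hfe)

theorem moment_productVector [CommSemiring R] (u : α → R) (v : β → R) (k : ℕ) (f : α → R)
    (g : β → R) :
    moment (fun p : α × β => u p.1 + v p.2) k (productVector f g) =
      ∑ m ∈ Finset.HasAntidiagonal.antidiagonal k,
        k.choose m.1 * (moment u m.1 f * moment v m.2 g) := by
  have hpow (p : α × β) := (Commute.all (u p.1) (v p.2)).add_pow' k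
  rw [moment_apply]
  simp only [productVector, hpow, nsmul_eq_mul, Finset.mul_sum]
  rw [Finset.sum_comm]
  refine Finset.sum_congr rfl fun m _ => ?_
  rw [moment_apply, moment_apply, Fintype.sum_mul_sum, ← Fintype.sum_prod_type', Finset.mul_sum]
  exact Finset.sum_congr rfl fun p _ => by ring

-- In degree the sum of the orders of the first nonzero moments of `f` and `g`, only one term of
-- the binomial expansion survives.
theorem exists_moment_productVector_ne_zero [CommRing R] [IsDomain R] [CharZero R] {u : α → R}
    {v : β → R} (hu : Function.Injective u) (hv : Function.Injective v) {f : α → R} {g : β → R}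
    (hf : f ≠ 0) (hg : g ≠ 0) :
    ∃ k, k + 1 < Fintype.card α + Fintype.card β ∧
      moment (fun p : α × β => u p.1 + v p.2) k (productVector f g) ≠ 0 := by
  classical
  have hf' := exists_moment_ne_zero hu hf
  have hg' := exists_moment_ne_zero hv hg
  let i := Nat.find hf'
  let j := Nat.find hg'
  obtain ⟨hi, hfi⟩ : i < Fintype.card α ∧ moment u i f ≠ 0 := Nat.find_spec hf'
  obtain ⟨hj, hgj⟩ : j < Fintype.card β ∧ moment v j g ≠ 0 := Nat.find_spec hg'
  have hfmin (a : ℕ) (ha : a < i) : moment u a f = 0 := by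
    by_contra h
    exact Nat.find_min hf' ha ⟨ha.trans hi, h⟩
  have hgmin (b : ℕ) (hb : b < j) : moment v b g = 0 := by
    by_contra h
    exact Nat.find_min hg' hb ⟨hb.trans hj, h⟩
  refine ⟨i + j, by omega, ?_⟩
  rw [moment_productVector, Finset.sum_eq_single (i, j)]
  · have hchoose : ((i + j).choose i : R) ≠ 0 :=
      Nat.cast_ne_zero.2 (Nat.choose_pos (Nat.le_add_right i j)).ne'
    exact mul_ne_zero hchoose (mul_ne_zero hfi hgj)
  · rintro ⟨a, b⟩ hab hne
    have hsum : a + b = i + j := Finset.HasAntidiagonal.mem_antidiagonal.1 hab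
    have hlt : a < i ∨ b < j := by
      by_contra! h
      exact hne (Prod.ext (show a = i by omega) (show b = j by omega))
    rcases hlt with ha | hb
    · simp [hfmin a ha]
    · simp [hgmin b hb]
  · simp

end Moment

section AlgebraicallyClosed

variable {K A : Type*} [Field K] [IsAlgClosed K] [CommRing A] [Algebra K A]
  [Algebra.FiniteType K A]

theorem exists_algHom_ker_eq_of_isMaximal (M : Ideal A) [M.IsMaximal] :
    ∃ η : A →ₐ[K] K, RingHom.ker η = M := by
  let := Ideal.Quotient.field M
  have : Module.Finite K (A ⧸ M) := finite_of_finite_type_of_isJacobsonRing K (A ⧸ M)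
  let e : K ≃ₐ[K] A ⧸ M :=
    .ofBijective (Algebra.ofId K (A ⧸ M)) IsAlgClosed.algebraMap_bijective_of_isIntegral
  refine ⟨e.symm.toAlgHom.comp (Ideal.Quotient.mkₐ K M), Ideal.ext fun r => ?_⟩
  simp [RingHom.mem_ker, Ideal.Quotient.eq_zero_iff_mem]

theorem ker_mem_minimalPrimes_of_forall_algHom_eq (ε : A →ₐ[K] K) {s : Set A}
    (hε : ∀ r ∈ s, ε r = 0) (huniq : ∀ η : A →ₐ[K] K, (∀ r ∈ s, η r = 0) → η = ε) :
    RingHom.ker ε ∈ (Ideal.span s).minimalPrimes := by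
  have : IsJacobsonRing A := isJacobsonRing_of_finiteType (A := K)
  refine ⟨⟨RingHom.ker_isPrime ε, Ideal.span_le.2 hε⟩, fun p ⟨hp, hsp⟩ _ => ?_⟩
  rw [← IsJacobsonRing.out ‹_› hp.isRadical]
  refine le_sInf fun M ⟨hpM, hM⟩ => ?_
  obtain ⟨η, rfl⟩ := exists_algHom_ker_eq_of_isMaximal (K := K) M
  rw [huniq η fun r hr => hpM (hsp (Ideal.subset_span hr))]

theorem height_ker_le_ncard_of_forall_algHom_eq (ε : A →ₐ[K] K) {s : Set A} (hs : s.Finite)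
    (hε : ∀ r ∈ s, ε r = 0) (huniq : ∀ η : A →ₐ[K] K, (∀ r ∈ s, η r = 0) → η = ε) :
    (RingHom.ker ε).height ≤ s.ncard :=
  have : IsNoetherianRing A := Algebra.FiniteType.isNoetherianRing K A
  Ideal.height_le_card_of_mem_minimalPrimes_span hs
    (ker_mem_minimalPrimes_of_forall_algHom_eq ε hε huniq)

end AlgebraicallyClosed

section KillVars

open MvPolynomial

variable {σ R B : Type*} [CommSemiring R] [CommSemiring B] [Algebra R B]

/-- The endomorphism of a polynomial ring setting the variables in `s` to zero: restriction of
functions to a coordinate subspace. -/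
noncomputable def killVars (s : Set σ) : MvPolynomial σ R →ₐ[R] MvPolynomial σ R :=
  aeval (sᶜ.indicator X)

theorem killVars_X_of_mem {s : Set σ} {i : σ} (hi : i ∈ s) :
    killVars s (X i : MvPolynomial σ R) = 0 := by
  simp [killVars, hi]

theorem killVars_X_of_notMem {s : Set σ} {i : σ} (hi : i ∉ s) :
    killVars s (X i : MvPolynomial σ R) = X i := by
  simp [killVars, hi]

theorem comp_killVars {s : Set σ} {g : MvPolynomial σ R →ₐ[R] B} (hg : ∀ i ∈ s, g (X i) = 0) :
    g.comp (killVars s) = g := by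
  ext i
  by_cases hi : i ∈ s
  · simp [killVars_X_of_mem hi, hg i hi]
  · simp [killVars_X_of_notMem hi]

end KillVars

section Segre

open MvPolynomial

variable (K α β : Type*) [Field K]

/-- The coordinate ring of the affine cone over the Segre variety of product vectors, realised as
the subalgebra generated by the products `x_a y_b`. -/
noncomputable abbrev segreAlgebra : Subalgebra K (MvPolynomial (α ⊕ β) K) :=
  Algebra.adjoin K (Set.range fun p : α × β => X (Sum.inl p.1) * X (Sum.inr p.2))

instance [Finite α] [Finite β] : Algebra.FiniteType K (segreAlgebra K α β) :=
  (Subalgebra.fg_iff_finiteType _).1 (Subalgebra.fg_def.2 ⟨_, Set.finite_range _, rfl⟩)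

variable {K α β}

/-- The generator `x_a y_b` of the Segre algebra. -/
noncomputable def segreCoord (p : α × β) : segreAlgebra K α β :=
  ⟨X (Sum.inl p.1) * X (Sum.inr p.2), Algebra.subset_adjoin ⟨p, rfl⟩⟩

theorem segreCoord_minors_eq (a a' : α) (b b' : β) :
    (segreCoord (a, b) * segreCoord (a', b') : segreAlgebra K α β) =
      segreCoord (a, b') * segreCoord (a', b) :=
  Subtype.ext <| by simp only [segreCoord, MulMemClass.mk_mul_mk]; ring

theorem algHom_segreAlgebra_ext {B : Type*} [Semiring B] [Algebra K B]
    {η η' : segreAlgebra K α β →ₐ[K] B} (h : ∀ p, η (segreCoord p) = η' (segreCoord p)) :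
    η = η' := by
  refine AlgHom.adjoin_ext ?_
  rintro _ ⟨p, rfl⟩
  exact h p

theorem exists_algHom_segreCoord_eq_productVector (η : segreAlgebra K α β →ₐ[K] K) :
    ∃ x y, (fun p => η (segreCoord p)) = productVector x y :=
  exists_eq_productVector_of_minors_eq _ fun a a' b b' => by
    rw [← map_mul, segreCoord_minors_eq, map_mul]

/-- The prime ideal of the Segre algebra cut out by the vanishing of the variables in `s`. -/
noncomputable abbrev segrePrime (s : Set (α ⊕ β)) : Ideal (segreAlgebra K α β) :=
  RingHom.ker ((killVars s).comp (segreAlgebra K α β).val)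

instance (s : Set (α ⊕ β)) : (segrePrime s : Ideal (segreAlgebra K α β)).IsPrime :=
  RingHom.ker_isPrime _

theorem segrePrime_lt_ker {B : Type*} [CommSemiring B] [Algebra K B] {s : Set (α ⊕ β)} {a : α}
    {b : β} (ha : Sum.inl a ∉ s) (hb : Sum.inr b ∉ s) {g : MvPolynomial (α ⊕ β) K →ₐ[K] B}
    (hg : ∀ i ∈ s, g (X i) = 0) (hab : g (X (Sum.inl a) * X (Sum.inr b)) = 0) :
    segrePrime s < RingHom.ker (g.comp (segreAlgebra K α β).val) := by
  refine SetLike.lt_iff_le_and_exists.2 ⟨fun r hr => ?_, segreCoord (a, b), hab, fun hmem => ?_⟩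
  · have hr' : killVars s (r : MvPolynomial (α ⊕ β) K) = 0 := hr
    change g r = 0
    rw [← comp_killVars hg, AlgHom.comp_apply, hr', map_zero]
  · have hmem' : killVars s (X (Sum.inl a) * X (Sum.inr b) : MvPolynomial (α ⊕ β) K) = 0 := hmem
    rw [map_mul, killVars_X_of_notMem ha, killVars_X_of_notMem hb] at hmem'
    exact mul_ne_zero (X_ne_zero _) (X_ne_zero _) hmem'

theorem card_le_height_segrePrime {a : α} {b : β} (s : Finset (α ⊕ β))
    (ha : Sum.inl a ∉ s) (hb : Sum.inr b ∉ s) :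
    (s.card : ℕ∞) ≤ (segrePrime s : Ideal (segreAlgebra K α β)).height := by
  classical
  induction s using Finset.induction_on with
  | empty => simp
  | insert v s hv ih =>
    have has : Sum.inl a ∉ s := mt Finset.mem_insert_of_mem ha
    have hbs : Sum.inr b ∉ s := mt Finset.mem_insert_of_mem hb
    have hkill : ∀ i ∈ (s : Set (α ⊕ β)),
        killVars (insert v s : Set (α ⊕ β)) (X i : MvPolynomial (α ⊕ β) K) = 0 :=
      fun i hi => killVars_X_of_mem (Set.mem_insert_of_mem v hi)
    have hkillv : killVars (insert v s : Set (α ⊕ β)) (X v : MvPolynomial (α ⊕ β) K) = 0 :=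
      killVars_X_of_mem (Set.mem_insert v _)
    have hlt : (segrePrime s : Ideal (segreAlgebra K α β)) <
        segrePrime (insert v s : Set (α ⊕ β)) := by
      rcases v with a' | b'
      · exact segrePrime_lt_ker (a := a') (b := b) hv hbs hkill (by rw [map_mul, hkillv, zero_mul])
      · exact segrePrime_lt_ker (a := a) (b := b') has hv hkill (by rw [map_mul, hkillv, mul_zero])
    rw [Finset.card_insert_of_notMem hv, Finset.coe_insert, Nat.cast_succ]
    exact (add_le_add_left (ih has hbs) 1).trans (Ideal.height_add_one_le_of_lt_of_isPrime hlt)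

variable (K α β)

/-- Evaluation at the vertex of the Segre cone. -/
noncomputable def segreVertex : segreAlgebra K α β →ₐ[K] K :=
  (aeval (0 : α ⊕ β → K)).comp (segreAlgebra K α β).val

instance : (RingHom.ker (segreVertex K α β)).IsPrime :=
  RingHom.ker_isPrime _

variable {α β} in
theorem segreVertex_segreCoord (p : α × β) : segreVertex K α β (segreCoord p) = 0 := by
  simp [segreVertex, segreCoord]

-- A chain of primes is obtained by killing the variables one at a time, all but one of each kind.
theorem card_add_card_le_height_ker_segreVertex_add_one [Fintype α] [Fintype β] [Nonempty α]
    [Nonempty β] :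
    ((Fintype.card α + Fintype.card β : ℕ) : ℕ∞) ≤
      (RingHom.ker (segreVertex K α β)).height + 1 := by
  classical
  obtain ⟨a⟩ := ‹Nonempty α›
  obtain ⟨b⟩ := ‹Nonempty β›
  let s : Finset (α ⊕ β) := (Finset.univ.erase (Sum.inl a)).erase (Sum.inr b)
  have hcard : Fintype.card α + Fintype.card β = s.card + 1 + 1 := by
    rw [Finset.card_erase_add_one (by simp), Finset.card_erase_add_one (by simp),
      Finset.card_univ, Fintype.card_sum]
  have ha : Sum.inl a ∉ s := by simp [s]
  have hb : Sum.inr b ∉ s := by simp [s]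
  have hlt : (segrePrime s : Ideal (segreAlgebra K α β)) < RingHom.ker (segreVertex K α β) :=
    segrePrime_lt_ker (mt Finset.mem_coe.1 ha) (mt Finset.mem_coe.1 hb) (by simp) (by simp)
  rw [hcard, Nat.cast_succ, Nat.cast_succ]
  gcongr
  exact (add_le_add_left (card_le_height_segrePrime s ha hb) 1).trans
    (Ideal.height_add_one_le_of_lt_of_isPrime hlt)

variable {K α β} [Fintype α] [Fintype β]

/-- The element of the Segre algebra given by a linear form in the coordinates of `α × β → K`. -/
noncomputable def segreForm (f : Module.Dual K (α × β → K)) : segreAlgebra K α β :=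
  ∑ p, f (Pi.basisFun K (α × β) p) • segreCoord p

theorem algHom_segreForm (η : segreAlgebra K α β →ₐ[K] K) (f : Module.Dual K (α × β → K)) :
    η (segreForm f) = f fun p => η (segreCoord p) := by
  conv_rhs => rw [← (Pi.basisFun K (α × β)).sum_repr fun p => η (segreCoord p)]
  simp [segreForm, mul_comm]

theorem exists_productVector_forall_eq_zero [IsAlgClosed K] {ι : Type*} [Fintype ι]
    [Nonempty α] [Nonempty β] (f : ι → Module.Dual K (α × β → K))
    (hι : Fintype.card ι + 1 < Fintype.card α + Fintype.card β) :
    ∃ (x : α → K) (y : β → K), productVector x y ≠ 0 ∧ ∀ k, f k (productVector x y) = 0 := by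
  by_contra! h
  let s : Set (segreAlgebra K α β) := Set.range fun k => segreForm (f k)
  have hvertex : ∀ r ∈ s, segreVertex K α β r = 0 := by
    rintro _ ⟨k, rfl⟩
    simp only [algHom_segreForm, segreVertex_segreCoord]
    exact map_zero (f k)
  have huniq (η : segreAlgebra K α β →ₐ[K] K) (hη : ∀ r ∈ s, η r = 0) :
      η = segreVertex K α β := by
    obtain ⟨x, y, hxy⟩ := exists_algHom_segreCoord_eq_productVector η
    have hf (k : ι) : f k (productVector x y) = 0 := by
      rw [← hxy, ← algHom_segreForm]
      exact hη _ ⟨k, rfl⟩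
    have hzero : productVector x y = 0 := by
      by_contra hne
      obtain ⟨k, hk⟩ := h x y hne
      exact hk (hf k)
    exact algHom_segreAlgebra_ext fun p =>
      (congrFun (hxy.trans hzero) p).trans (segreVertex_segreCoord K p).symm
  have hheight := height_ker_le_ncard_of_forall_algHom_eq _ (Set.finite_range _) hvertex huniq
  have hncard : s.ncard ≤ Fintype.card ι := by
    rw [← Nat.card_eq_fintype_card, ← Nat.card_coe_set_eq]
    exact Finite.card_range_le _
  have hcard := card_add_card_le_height_ker_segreVertex_add_one K α β
  have : Fintype.card α + Fintype.card β ≤ Fintype.card ι + 1 := by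
    exact_mod_cast hcard.trans (add_le_add_left (hheight.trans (Nat.cast_le.2 hncard)) 1)
  omega

theorem exists_productVector_mem [IsAlgClosed K] (V : Submodule K (α × β → K))
    (hV : (Fintype.card α - 1) * (Fintype.card β - 1) < Module.finrank K V) :
    ∃ (x : α → K) (y : β → K), productVector x y ≠ 0 ∧ productVector x y ∈ V := by
  have hfinrank := V.finrank_quotient_add_finrank
  rw [Module.finrank_fintype_fun_eq_card, Fintype.card_prod] at hfinrank
  have hcard : Fintype.card α * Fintype.card β ≠ 0 := by omega
  obtain ⟨p, hp⟩ := Nat.exists_eq_succ_of_ne_zero (left_ne_zero_of_mul hcard)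
  obtain ⟨q, hq⟩ := Nat.exists_eq_succ_of_ne_zero (right_ne_zero_of_mul hcard)
  have : Nonempty α := Fintype.card_pos_iff.1 (by omega)
  have : Nonempty β := Fintype.card_pos_iff.1 (by omega)
  have hlt : Module.finrank K ((α × β → K) ⧸ V) + 1 < Fintype.card α + Fintype.card β := by
    simp only [hp, hq, Nat.succ_eq_add_one, Nat.add_sub_cancel] at hV hfinrank ⊢
    linarith
  let b := Module.finBasis K ((α × β → K) ⧸ V)
  obtain ⟨x, y, hne, hxy⟩ := exists_productVector_forall_eq_zero
    (fun k => b.coord k ∘ₗ V.mkQ) (by rwa [Fintype.card_fin])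
  exact ⟨x, y, hne, (Submodule.Quotient.mk_eq_zero V).1 (b.forall_coord_eq_zero_iff.1 hxy)⟩

end Segre

section SumOfCoordinates

variable {R α β : Type*} [Add R] {u : α → R} {v : β → R}

theorem injective_left_of_injective_add [Nonempty β]
    (h : Function.Injective fun p : α × β => u p.1 + v p.2) : Function.Injective u := by
  obtain ⟨b⟩ := ‹Nonempty β›
  exact fun a a' haa' => (Prod.ext_iff.1 (@h (a, b) (a', b) (congrArg (· + v b) haa'))).1

theorem injective_right_of_injective_add [Nonempty α]
    (h : Function.Injective fun p : α × β => u p.1 + v p.2) : Function.Injective v := by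
  obtain ⟨a⟩ := ‹Nonempty α›
  exact fun b b' hbb' => (Prod.ext_iff.1 (@h (a, b) (a, b') (congrArg (u a + ·) hbb'))).2

end SumOfCoordinates

theorem exists_submodule_finrank_eq {K E : Type*} [DivisionRing K] [AddCommGroup E] [Module K E]
    (U : Submodule K E) {m : ℕ} (hm : m ≤ Module.finrank K U) :
    ∃ W ≤ U, Module.finrank K W = m := by
  obtain ⟨b, hb⟩ := exists_linearIndependent_of_le_finrank hm
  have hbE : LinearIndependent K (U.subtype ∘ b) := hb.map' _ U.ker_subtype
  refine ⟨Submodule.span K (Set.range (U.subtype ∘ b)), Submodule.span_le.2 ?_, ?_⟩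
  · rintro _ ⟨k, rfl⟩
    exact (b k).2
  · rw [finrank_span_eq_card hbE, Fintype.card_fin]

theorem add_le_add_of_mul_eq_mul {a b p q : ℕ} (ha : 0 < a) (hap : a ≤ p) (haq : a ≤ q)
    (h : p * q = a * b) : p + q ≤ a + b := by
  obtain ⟨x, rfl⟩ := Nat.exists_eq_add_of_le hap
  obtain ⟨y, rfl⟩ := Nat.exists_eq_add_of_le haq
  refine Nat.le_of_mul_le_mul_left ?_ ha
  calc a * (a + x + (a + y)) ≤ a * (a + x + (a + y)) + x * y := Nat.le_add_right _ _
    _ = a * a + (a + x) * (a + y) := by ring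
    _ = a * (a + b) := by rw [h, mul_add]

theorem sub_one_mul_sub_one_add_add_sub_one {a b : ℕ} (ha : 0 < a) (hb : 0 < b) :
    (a - 1) * (b - 1) + (a + b - 1) = a * b := by
  obtain ⟨p, rfl⟩ := Nat.exists_eq_add_one_of_ne_zero ha.ne'
  obtain ⟨q, rfl⟩ := Nat.exists_eq_add_one_of_ne_zero hb.ne'
  rw [← add_assoc]
  simp only [Nat.add_sub_cancel]
  ring

section Bipartition

variable {n : ℕ} (d : Fin n → ℕ) (S : Set (Fin n))

/-- Splitting a multi-index into its parts on `S` and on `Sᶜ`. -/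
noncomputable def splitIndex :
    ((j : Fin n) → Fin (d j)) ≃ ((j : S) → Fin (d j)) × ((j : ↥Sᶜ) → Fin (d j)) :=
  open Classical in Equiv.piEquivPiSubtypeProd (· ∈ S) fun j => Fin (d j)

/-- The dimension `∏ j ∈ S, d j` of the space of the parties in `S`. -/
noncomputable def blockDim : ℕ :=
  Nat.card ((j : S) → Fin (d j))

theorem blockDim_mul_blockDim_compl : blockDim d S * blockDim d Sᶜ = ∏ j, d j := by
  rw [blockDim, blockDim, ← Nat.card_prod, ← Nat.card_congr (splitIndex d S), Nat.card_pi]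
  simp

variable {d S}

theorem le_blockDim {j : Fin n} (hd : ∀ j, 0 < d j) (hj : j ∈ S) : d j ≤ blockDim d S := by
  have (j : S) : Nonempty (Fin (d j)) := ⟨⟨0, hd j⟩⟩
  simpa [blockDim] using Nat.card_le_card_of_surjective _
    (Function.surjective_eval (β := fun j : S => Fin (d j)) ⟨j, hj⟩)

theorem blockDim_singleton (z : Fin n) : blockDim d {z} = d z :=
  (Nat.card_congr (Equiv.piUnique _)).trans (Nat.card_fin _)

theorem blockDim_compl_singleton {z : Fin n} (hz : 0 < d z) :
    blockDim d {z}ᶜ = ∏ j ∈ Finset.univ.erase z, d j := by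
  refine Nat.eq_of_mul_eq_mul_left hz ?_
  rw [Finset.mul_prod_erase _ _ (Finset.mem_univ z), ← blockDim_mul_blockDim_compl d {z},
    blockDim_singleton]

theorem biseparable_iff {ψ : EuclideanSpace ℂ ((j : Fin n) → Fin (d j))} :
    Biseparable S ψ ↔ ∃ φ χ, ⇑ψ = productVector φ χ ∘ splitIndex d S :=
  exists_congr fun _ => exists_congr fun _ => funext_iff.symm

variable (d) in
/-- The number of a multi-index in the mixed radix enumeration, as a node for moments. -/
def indexRank (i : (j : Fin n) → Fin (d j)) : ℂ :=
  (finPiFinEquiv i : ℕ)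

theorem indexRank_injective : Function.Injective (indexRank d) :=
  Nat.cast_injective.comp (Fin.val_injective.comp finPiFinEquiv.injective)

variable (d S) in
theorem exists_indexRank_eq_add :
    ∃ (u : ((j : S) → Fin (d j)) → ℂ) (v : ((j : ↥Sᶜ) → Fin (d j)) → ℂ),
      indexRank d = (fun p => u p.1 + v p.2) ∘ splitIndex d S := by
  classical
  let w (j : Fin n) : ℂ := ∏ l : Fin j, (d (Fin.castLE j.is_lt.le l) : ℂ)
  refine ⟨fun x => ∑ j, (x j : ℕ) * w j, fun y => ∑ j, (y j : ℕ) * w j, funext fun i => ?_⟩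
  have hsum : indexRank d i = ∑ j, (i j : ℕ) * w j := by
    simp [indexRank, finPiFinEquiv_apply, w]
  exact hsum.trans (Fintype.sum_subtype_add_sum_subtype (· ∈ S) _).symm

theorem not_biseparable_of_moment_eq_zero {c : ℕ} (hc : blockDim d S + blockDim d Sᶜ ≤ c + 1)
    {ψ : EuclideanSpace ℂ ((j : Fin n) → Fin (d j))} (hψ0 : ψ ≠ 0)
    (hψ : ∀ k < c, moment (indexRank d) k ψ = 0) : ¬ Biseparable S ψ := by
  classical
  rw [biseparable_iff]
  rintro ⟨φ, χ, h⟩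
  have hne : productVector φ χ ≠ 0 := fun h0 => hψ0 (PiLp.ext fun i => by simp [h, h0])
  have hφ := left_ne_zero_of_productVector_ne_zero hne
  have hχ := right_ne_zero_of_productVector_ne_zero hne
  obtain ⟨a, -⟩ := Function.ne_iff.1 hφ
  obtain ⟨b, -⟩ := Function.ne_iff.1 hχ
  have : Nonempty ((j : S) → Fin (d j)) := ⟨a⟩
  have : Nonempty ((j : ↥Sᶜ) → Fin (d j)) := ⟨b⟩
  obtain ⟨u, v, hrank⟩ := exists_indexRank_eq_add d S
  have hinj := ((splitIndex d S).injective_comp _).1 (hrank ▸ indexRank_injective (d := d))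
  obtain ⟨k, hk, hmoment⟩ := exists_moment_productVector_ne_zero
    (injective_left_of_injective_add hinj) (injective_right_of_injective_add hinj) hφ hχ
  rw [← Nat.card_eq_fintype_card, ← Nat.card_eq_fintype_card] at hk
  refine hmoment ?_
  rw [← moment_comp_equiv (splitIndex d S), ← hrank, ← h]
  exact hψ k (Nat.lt_of_add_lt_add_right (hk.trans_le hc))

variable (d) in
theorem exists_submodule_forall_gme {c G : ℕ} (hG : G + c ≤ ∏ j, d j)
    (hc : ∀ S : Set (Fin n), S ≠ ∅ → S ≠ Set.univ → blockDim d S + blockDim d Sᶜ ≤ c + 1) :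
    ∃ W : Submodule ℂ (EuclideanSpace ℂ ((j : Fin n) → Fin (d j))),
      Module.finrank ℂ W = G ∧ ∀ ψ ∈ W, ψ ≠ 0 → GME ψ := by
  let μ : EuclideanSpace ℂ ((j : Fin n) → Fin (d j)) →ₗ[ℂ] Fin c → ℂ :=
    LinearMap.pi (fun k => moment (indexRank d) k) ∘ₗ (WithLp.linearEquiv 2 ℂ _).toLinearMap
  have hker : G ≤ Module.finrank ℂ (LinearMap.ker μ) := by
    have hrange : Module.finrank ℂ (LinearMap.range μ) ≤ c :=
      (Submodule.finrank_le _).trans_eq (Module.finrank_fin_fun ℂ)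
    have hsum := μ.finrank_range_add_finrank_ker
    rw [finrank_euclideanSpace, Fintype.card_pi] at hsum
    simp only [Fintype.card_fin] at hsum
    omega
  obtain ⟨W, hW, hfinrank⟩ := exists_submodule_finrank_eq (LinearMap.ker μ) hker
  refine ⟨W, hfinrank, fun ψ hψ hψ0 => ⟨hψ0, fun S hS hS' => ?_⟩⟩
  exact not_biseparable_of_moment_eq_zero (hc S hS hS') hψ0 fun k hk =>
    congrFun (LinearMap.mem_ker.1 (hW hψ)) ⟨k, hk⟩

theorem exists_biseparable_mem {V : Submodule ℂ (EuclideanSpace ℂ ((j : Fin n) → Fin (d j)))}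
    (hV : (blockDim d S - 1) * (blockDim d Sᶜ - 1) < Module.finrank ℂ V) :
    ∃ ψ ∈ V, ψ ≠ 0 ∧ Biseparable S ψ := by
  classical
  let e := (WithLp.linearEquiv 2 ℂ (((j : Fin n) → Fin (d j)) → ℂ)).trans
    (LinearEquiv.funCongrLeft ℂ ℂ (splitIndex d S).symm)
  rw [blockDim, blockDim, Nat.card_eq_fintype_card, Nat.card_eq_fintype_card,
    ← LinearEquiv.finrank_map_eq e V] at hV
  obtain ⟨φ, χ, hne, ψ, hψ, hψe⟩ := exists_productVector_mem _ hV
  refine ⟨ψ, hψ, ?_, biseparable_iff.2 ⟨φ, χ, ?_⟩⟩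
  · rintro rfl
    exact hne (hψe.symm.trans (map_zero e))
  · exact ((splitIndex d S).comp_symm_eq _ _).1 hψe

end Bipartition

theorem max_dim_GES_general {n : ℕ} (hn : 2 ≤ n) (d : Fin n → ℕ) (z : Fin n) (hpos : 0 < d z)
    (hmin : ∀ j, d z ≤ d j) :
    (∃ W : Submodule ℂ (EuclideanSpace ℂ ((j : Fin n) → Fin (d j))),
        Module.finrank ℂ W = (d z - 1) * ((∏ j ∈ Finset.univ.erase z, d j) - 1) ∧
          ∀ ψ ∈ W, ψ ≠ 0 → GME ψ) ∧
    (∀ V : Submodule ℂ (EuclideanSpace ℂ ((j : Fin n) → Fin (d j))),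
        Module.finrank ℂ V = (d z - 1) * ((∏ j ∈ Finset.univ.erase z, d j) - 1) + 1 →
        ∃ ψ ∈ V, ψ ≠ 0 ∧ ∃ S : Set (Fin n), S ≠ ∅ ∧ S ≠ Set.univ ∧ Biseparable S ψ) := by
  have hd (j : Fin n) : 0 < d j := hpos.trans_le (hmin j)
  have hprod := Finset.mul_prod_erase Finset.univ d (Finset.mem_univ z)
  constructor
  · refine exists_submodule_forall_gme d (c := d z + ∏ j ∈ Finset.univ.erase z, d j - 1) ?_ ?_
    · have hD : 0 < ∏ j ∈ Finset.univ.erase z, d j := Finset.prod_pos fun j _ => hd j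
      rw [← hprod]
      exact (sub_one_mul_sub_one_add_add_sub_one hpos hD).le
    · intro S hS hS'
      obtain ⟨j, hj⟩ := Set.nonempty_iff_ne_empty.2 hS
      obtain ⟨j', hj'⟩ := Set.nonempty_compl.2 hS'
      have hle := add_le_add_of_mul_eq_mul hpos ((hmin j).trans (le_blockDim hd hj))
        ((hmin j').trans (le_blockDim hd hj')) ((blockDim_mul_blockDim_compl d S).trans hprod.symm)
      omega
  · intro V hV
    obtain ⟨ψ, hψ, hψ0, hsep⟩ := exists_biseparable_mem (S := {z}) (V := V) (by
      rw [blockDim_singleton, blockDim_compl_singleton hpos, hV]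
      exact Nat.lt_succ_self _)
    have : Nontrivial (Fin n) := Fin.nontrivial_iff_two_le.2 hn
    exact ⟨ψ, hψ, hψ0, {z}, Set.singleton_ne_empty z, Set.singleton_ne_univ z, hsep⟩

/-- Theorem 2: the maximum dimension of a genuinely entangled subspace of
`⊗_j ℂ^{d_j}` (with `d` monotone) is `(d 0 − 1) * (∏_{j ≥ 1} d j − 1)`. -/
theorem max_dim_GES (n : ℕ) (hn : 2 ≤ n) (d : Fin n → ℕ) (hmono : Monotone d)
    (hd : ∀ j, 2 ≤ d j) (G : ℕ)
    (hG : G = (d ⟨0, by omega⟩ - 1) *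
        ((∏ j ∈ Finset.univ.erase (⟨0, by omega⟩ : Fin n), d j) - 1)) :
    (∃ Gsub : Submodule ℂ (EuclideanSpace ℂ ((j : Fin n) → Fin (d j))),
        Module.finrank ℂ ↥Gsub = G ∧ ∀ ψ ∈ Gsub, ψ ≠ 0 → GME ψ) ∧
    (∀ V : Submodule ℂ (EuclideanSpace ℂ ((j : Fin n) → Fin (d j))),
        Module.finrank ℂ ↥V = G + 1 →
        ∃ ψ ∈ V, ψ ≠ 0 ∧ ∃ S : Set (Fin n), S ≠ ∅ ∧ S ≠ Set.univ ∧ Biseparable S ψ) := by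
  subst hG
  exact max_dim_GES_general hn d _ (two_pos.trans_le (hd _)) fun j =>
    hmono (Fin.mk_le_of_le_val j.1.zero_le)
end
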